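/- Basis functions for the first enriched triple: with the setting of the first family (affinely independent v₁, v₂, v₃, barycentric coordinates λᵢ, edge parametrizations γⱼ, density k̃_{σ,μ}, polynomial p_{σ,μ}, μ ≥ 1, σ > 0), define φᵢ = 1 - 2λᵢ and ψᵢ = -A_{σ,μ} φᵢ + (2/‖p_{σ,μ}‖²_{2,σ,μ})(-λᵢ² + λ_{i+1}² + λ_{i+2}²) for i = 1,2,3, where ‖p_{σ,μ}‖²_{2,σ,μ} = ∫_{-1}^{1} p_{σ,μ}(t)² k̃_{σ,μ}(t) dt and A_{σ,μ} = (1 + t_{2,σ,μ})/‖p_{σ,μ}‖²_{2,σ,μ}. Then for all i, j ∈ {1,2,3}: I_j(φᵢ) = δᵢⱼ, L_j(φᵢ) = 0, I_j(ψᵢ) = 0, and L_j(ψᵢ) = δᵢⱼ, where I_j(f) = ∫_{-1}^{1} f(γⱼ(t)) k̃_{σ,μ}(t) dt and L_j(f) = ∫_{-1}^{1} p_{σ,μ}(t) f(γⱼ(t)) k̃_{σ,μ}(t) dt. -/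

import Mathlib

open MeasureTheory

/-- Lower incomplete gamma function `γ(s,z) = ∫₀^z u^(s-1) e^(-u) du`. -/
noncomputable def lowGamma (s z : ℝ) : ℝ := ∫ u in (0:ℝ)..z, u ^ (s - 1) * Real.exp (-u)

/-- Modified lower incomplete gamma function `γ^mod(s,z) = γ(s,z)/z^s`. -/
noncomputable def gammaMod (s z : ℝ) : ℝ := lowGamma s z / z ^ s

/-- First family of densities `k̃_{σ,μ}` on `[-1,1]`. -/
noncomputable def kTilde (σ μ t : ℝ) : ℝ :=
  (μ / gammaMod ((4 * μ - 3) / (2 * μ)) (1 / (2 * σ ^ (2 * μ)))) *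
    (t ^ 2) ^ (2 * μ - 2) * Real.exp (-(1 / 2) * (t ^ 2 / σ ^ 2) ^ μ)

/-- Second moment `t_{2,σ,μ}` of `k̃_{σ,μ}`. -/
noncomputable def tMom2 (σ μ : ℝ) : ℝ := ∫ t in (-1:ℝ)..1, t ^ 2 * kTilde σ μ t

/-- The orthogonal quadratic polynomial `p_{σ,μ}(t) = t² - t_{2,σ,μ}`. -/
noncomputable def pPoly (σ μ t : ℝ) : ℝ := t ^ 2 - tMom2 σ μ

/-- The squared norm `‖p_{σ,μ}‖²_{2,σ,μ}`. -/
noncomputable def pNormSq (σ μ : ℝ) : ℝ :=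
  ∫ t in (-1:ℝ)..1, (pPoly σ μ t) ^ 2 * kTilde σ μ t

/-- The coefficient `A_{σ,μ} = (1 + t_{2,σ,μ})/‖p_{σ,μ}‖²_{2,σ,μ}`. -/
noncomputable def Acoef (σ μ : ℝ) : ℝ := (1 + tMom2 σ μ) / pNormSq σ μ

/-- Parametrization of the edge `s_j` of the triangle, opposite to the vertex `v j`
(indices taken cyclically in `Fin 3`). -/
noncomputable def edgeParam (v : Fin 3 → ℝ × ℝ) (j : Fin 3) (t : ℝ) : ℝ × ℝ :=
  ((1 + t) / 2) • v (j + 1) + ((1 - t) / 2) • v (j + 2)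

/-- The basis function `φᵢ = 1 - 2λᵢ`. -/
def phiB (lam : Fin 3 → ℝ × ℝ → ℝ) (i : Fin 3) (x : ℝ × ℝ) : ℝ := 1 - 2 * lam i x

/-- The basis function
`ψᵢ = -A_{σ,μ} φᵢ + (2/‖p_{σ,μ}‖²_{2,σ,μ})(-λᵢ² + λ_{i+1}² + λ_{i+2}²)`. -/
noncomputable def psiB (σ μ : ℝ) (lam : Fin 3 → ℝ × ℝ → ℝ) (i : Fin 3) (x : ℝ × ℝ) : ℝ :=
  -Acoef σ μ * phiB lam i x
    + (2 / pNormSq σ μ) * (-(lam i x) ^ 2 + (lam (i + 1) x) ^ 2 + (lam (i + 2) x) ^ 2)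

/-!
On the edge `γ j` we have `φ j = 1` and `ψ j = p / ‖p‖²`, while for `i ≠ j` the function `φ i` is
`±t` and `ψ i` is a multiple of it. Since `k̃` and `p` are even, the off-diagonal functionals vanish
by parity; the diagonal ones reduce to `∫ k̃ = 1`, `∫ p k̃ = 0` and `∫ p² k̃ / ‖p‖² = 1`. The
normalization `∫ k̃ = 1` is the substitution `u = t ^ (2 μ)` in the integral defining `γ^mod`.
-/

section IntervalIntegrals

variable {E : Type*} [NormedAddCommGroup E] [NormedSpace ℝ E]

theorem integral_eq_zero_of_odd {f : ℝ → E} (hf : f.Odd) (a : ℝ) : ∫ t in -a..a, f t = 0 := by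
  have h := intervalIntegral.integral_comp_neg (a := -a) (b := a) f
  simp only [hf.eq, intervalIntegral.integral_neg, neg_neg] at h
  have : IsAddTorsionFree E := .of_isTorsionFree ℝ E
  exact neg_eq_self.1 h

theorem integral_eq_two_smul_of_even {f : ℝ → E} {a : ℝ} (hf : f.Even)
    (hint : IntervalIntegrable f volume (-a) a) :
    ∫ t in -a..a, f t = (2 : ℝ) • ∫ t in 0..a, f t := by
  have hmem : (0 : ℝ) ∈ Set.uIcc (-a) a := by
    rcases le_total 0 a with ha | ha <;> simp [ha]
  have hleft : ∫ t in -a..0, f t = ∫ t in 0..a, f t := by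
    simpa [hf.eq] using (intervalIntegral.integral_comp_neg (a := 0) (b := a) f).symm
  rw [← intervalIntegral.integral_add_adjacent_intervals
      (hint.mono_set (Set.uIcc_subset_uIcc_left hmem))
      (hint.mono_set (Set.uIcc_subset_uIcc_right hmem)), hleft, two_smul]

theorem integral_pos_of_ae_pos {f : ℝ → ℝ} {a b : ℝ} (hab : a < b)
    (hint : IntervalIntegrable f volume a b) (hf : ∀ᵐ t, 0 < f t) : 0 < ∫ t in a..b, f t := by
  refine (intervalIntegral.integral_pos_iff_support_of_nonneg_ae
    (hf.mono fun t ht => ht.le) hint).2 ⟨hab, ?_⟩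
  have hsupp : Function.support f =ᵐ[volume] Set.univ :=
    Filter.eventuallyEq_univ.2 (hf.mono fun t ht => ht.ne')
  rw [measure_congr (hsupp.inter (ae_eq_refl (Set.Ioc a b))), Set.univ_inter]
  simpa using hab

theorem integral_comp_rpow (g : ℝ → E) {p b : ℝ} (hp : 0 < p) (hb : 0 ≤ b) :
    ∫ t in 0..b, (p * t ^ (p - 1)) • g (t ^ p) = ∫ u in 0..b ^ p, g u := by
  have hcut : ∀ t ∈ Set.Ioi (0 : ℝ),
      (p * t ^ (p - 1)) • (Set.Iic (b ^ p)).indicator g (t ^ p) =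
        (Set.Iic b).indicator (fun t => (p * t ^ (p - 1)) • g (t ^ p)) t := fun t ht => by
    simp only [Set.indicator_apply, Set.mem_Iic, Real.rpow_le_rpow_iff (le_of_lt ht) hb hp,
      smul_ite, smul_zero]
  have h := integral_comp_rpow_Ioi_of_pos (g := (Set.Iic (b ^ p)).indicator g) hp
  rwa [setIntegral_congr_fun measurableSet_Ioi hcut, setIntegral_indicator measurableSet_Iic,
    setIntegral_indicator measurableSet_Iic, Set.Ioi_inter_Iic, Set.Ioi_inter_Iic,
    ← intervalIntegral.integral_of_le hb,
    ← intervalIntegral.integral_of_le (Real.rpow_nonneg hb p)] at h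

end IntervalIntegrals

section IncompleteGamma

variable {s z p : ℝ}

theorem intervalIntegrable_rpow_mul_exp_neg_mul_rpow {r : ℝ} (hr : -1 < r) (hp : 0 ≤ p)
    (z a b : ℝ) :
    IntervalIntegrable (fun t : ℝ => t ^ r * Real.exp (-(z * t ^ p))) volume a b :=
  (intervalIntegral.intervalIntegrable_rpow' hr).mul_continuousOn
    (Real.continuous_exp.comp
      (continuous_const.mul (Real.continuous_rpow_const hp)).neg).continuousOn

theorem gammaMod_pos (hs : 0 < s) (hz : 0 < z) : 0 < gammaMod s z := by
  refine div_pos (intervalIntegral.intervalIntegral_pos_of_pos_on ?_ ?_ hz) (by positivity)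
  · simpa using intervalIntegrable_rpow_mul_exp_neg_mul_rpow (r := s - 1) (by linarith)
      zero_le_one 1 0 z
  · intro u hu
    have := hu.1
    positivity

theorem gammaMod_eq_integral_zero_one (s : ℝ) (hz : 0 < z) :
    gammaMod s z = ∫ u in (0 : ℝ)..1, u ^ (s - 1) * Real.exp (-(z * u)) := by
  have hscale : lowGamma s z =
      z * ∫ u in (0 : ℝ)..1, (z * u) ^ (s - 1) * Real.exp (-(z * u)) := by
    rw [intervalIntegral.mul_integral_comp_mul_left
      (f := fun u => u ^ (s - 1) * Real.exp (-u)), mul_zero, mul_one, lowGamma]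
  have hfactor : ∫ u in (0 : ℝ)..1, (z * u) ^ (s - 1) * Real.exp (-(z * u)) =
      z ^ (s - 1) * ∫ u in (0 : ℝ)..1, u ^ (s - 1) * Real.exp (-(z * u)) := by
    rw [← intervalIntegral.integral_const_mul]
    refine intervalIntegral.integral_congr fun u hu => ?_
    rw [Set.uIcc_of_le zero_le_one] at hu
    simp only [Real.mul_rpow hz.le hu.1, mul_assoc]
  rw [gammaMod, hscale, hfactor, Real.rpow_sub_one hz.ne']
  field_simp

theorem integral_rpow_mul_exp_eq_gammaMod (r : ℝ) (hp : 0 < p) (hz : 0 < z) :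
    ∫ t in (0 : ℝ)..1, t ^ r * Real.exp (-(z * t ^ p)) = gammaMod ((r + 1) / p) z / p := by
  have hsubst := integral_comp_rpow (fun u : ℝ => u ^ ((r + 1) / p - 1) * Real.exp (-(z * u)))
    hp zero_le_one
  rw [Real.one_rpow, ← gammaMod_eq_integral_zero_one _ hz] at hsubst
  rw [eq_div_iff hp.ne', ← hsubst, mul_comm, ← intervalIntegral.integral_const_mul]
  refine intervalIntegral.integral_congr_uIoo fun t ht => ?_
  have ht0 : 0 < t := by simpa using ht.1
  have hpow : t ^ r = t ^ (p - 1) * (t ^ p) ^ ((r + 1) / p - 1) := by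
    rw [← Real.rpow_mul ht0.le, ← Real.rpow_add ht0]
    congr 1
    field_simp
    ring
  simp only [hpow, smul_eq_mul, mul_assoc]

end IncompleteGamma

section Density

variable {σ μ : ℝ}

theorem kTilde_even (σ μ : ℝ) : (kTilde σ μ).Even := fun t => by
  simp only [kTilde, neg_sq]

theorem pPoly_even (σ μ : ℝ) : (pPoly σ μ).Even := fun t => by
  simp only [pPoly, neg_sq]

theorem gammaMod_normalizer_pos (hσ : 0 < σ) (hμ : 3 / 4 < μ) :
    0 < gammaMod ((4 * μ - 3) / (2 * μ)) (1 / (2 * σ ^ (2 * μ))) :=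
  gammaMod_pos (div_pos (by linarith) (by linarith)) (by positivity)

theorem kTilde_pos (hσ : 0 < σ) (hμ : 3 / 4 < μ) {t : ℝ} (ht : t ≠ 0) : 0 < kTilde σ μ t := by
  have : 0 < μ := by linarith
  have := gammaMod_normalizer_pos hσ hμ
  unfold kTilde
  positivity

theorem kTilde_of_nonneg (hσ : 0 ≤ σ) (μ : ℝ) {t : ℝ} (ht : 0 ≤ t) :
    kTilde σ μ t = μ / gammaMod ((4 * μ - 3) / (2 * μ)) (1 / (2 * σ ^ (2 * μ))) *
      (t ^ (4 * μ - 4) * Real.exp (-(1 / (2 * σ ^ (2 * μ)) * t ^ (2 * μ)))) := by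
  have hpow : (t ^ 2) ^ (2 * μ - 2) = t ^ (4 * μ - 4) := by
    rw [← Real.rpow_natCast_mul ht]
    push_cast
    ring_nf
  have hexp : -(1 / 2) * (t ^ 2 / σ ^ 2) ^ μ = -(1 / (2 * σ ^ (2 * μ)) * t ^ (2 * μ)) := by
    rw [Real.div_rpow (by positivity) (by positivity), ← Real.rpow_natCast_mul ht,
      ← Real.rpow_natCast_mul hσ]
    push_cast
    ring
  rw [kTilde, hpow, hexp, mul_assoc]

theorem intervalIntegrable_kTilde (hσ : 0 ≤ σ) (hμ : 3 / 4 < μ) (a b : ℝ) :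
    IntervalIntegrable (kTilde σ μ) volume a b := by
  refine intervalIntegrable_of_even (fun t => (kTilde_even σ μ t).symm) fun c hc => ?_
  refine (intervalIntegrable_congr fun t ht => kTilde_of_nonneg hσ μ ?_).2
    ((intervalIntegrable_rpow_mul_exp_neg_mul_rpow (by linarith) (by linarith) _ 0 c).const_mul _)
  rw [Set.uIoc_of_le hc.le] at ht
  exact ht.1.le

theorem intervalIntegrable_mul_kTilde (hσ : 0 ≤ σ) (hμ : 3 / 4 < μ) {q : ℝ → ℝ}
    (hq : Continuous q) (a b : ℝ) :
    IntervalIntegrable (fun t => q t * kTilde σ μ t) volume a b :=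
  (intervalIntegrable_kTilde hσ hμ a b).continuousOn_mul hq.continuousOn

theorem integral_kTilde (hσ : 0 < σ) (hμ : 3 / 4 < μ) : ∫ t in (-1 : ℝ)..1, kTilde σ μ t = 1 := by
  have : 0 < μ := by linarith
  have hγ := gammaMod_normalizer_pos hσ hμ
  have hhalf : ∫ t in (0 : ℝ)..1, kTilde σ μ t = 1 / 2 := by
    rw [intervalIntegral.integral_congr fun t ht =>
        kTilde_of_nonneg hσ.le μ (by simpa using ht.1),
      intervalIntegral.integral_const_mul,
      integral_rpow_mul_exp_eq_gammaMod _ (by positivity) (by positivity),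
      show 4 * μ - 4 + 1 = 4 * μ - 3 by ring]
    generalize gammaMod _ _ = γ at hγ
    field_simp
  rw [integral_eq_two_smul_of_even (kTilde_even σ μ) (intervalIntegrable_kTilde hσ.le hμ _ _),
    hhalf]
  norm_num

theorem integral_pPoly_mul_kTilde (hσ : 0 < σ) (hμ : 3 / 4 < μ) :
    ∫ t in (-1 : ℝ)..1, pPoly σ μ t * kTilde σ μ t = 0 := by
  simp only [pPoly, sub_mul]
  rw [intervalIntegral.integral_sub (intervalIntegrable_mul_kTilde hσ.le hμ (by fun_prop) _ _)
      ((intervalIntegrable_kTilde hσ.le hμ _ _).const_mul _),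
    intervalIntegral.integral_const_mul, integral_kTilde hσ hμ, mul_one, ← tMom2, sub_self]

theorem ae_pPoly_ne_zero (σ μ : ℝ) : ∀ᵐ t, pPoly σ μ t ≠ 0 := by
  have hzeros : {t | pPoly σ μ t = 0} ⊆ {√(tMom2 σ μ), -√(tMom2 σ μ)} := fun t ht => by
    have hsq : t ^ 2 = tMom2 σ μ := sub_eq_zero.1 ht
    rw [← hsq, Real.sqrt_sq_eq_abs]
    rcases abs_choice t with h | h <;> simp [h]
  exact ((Set.toFinite _).subset hzeros).countable.ae_notMem volume

theorem pNormSq_pos (hσ : 0 < σ) (hμ : 3 / 4 < μ) : 0 < pNormSq σ μ := by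
  have hcont : Continuous fun t => pPoly σ μ t ^ 2 := by
    unfold pPoly
    fun_prop
  refine integral_pos_of_ae_pos (by norm_num) (intervalIntegrable_mul_kTilde hσ.le hμ hcont _ _) ?_
  filter_upwards [ae_pPoly_ne_zero σ μ, Measure.ae_ne volume 0] with t hp ht
  exact mul_pos (by positivity) (kTilde_pos hσ hμ ht)

end Density

theorem eq_add_one_or_eq_add_two_of_ne {i j : Fin 3} (hij : i ≠ j) : i = j + 1 ∨ i = j + 2 := by
  decide +revert

/-- `lam` is the family of barycentric coordinates of the triangle with vertices `v`, encoded as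
affine functions dual to the vertices; this determines the values of `lam` on the edges. -/
structure IsBarycentric (v : Fin 3 → ℝ × ℝ) (lam : Fin 3 → ℝ × ℝ → ℝ) : Prop where
  affine : ∀ i, ∃ A : (ℝ × ℝ) →ᵃ[ℝ] ℝ, ∀ x, lam i x = A x
  kronecker : ∀ i j, lam i (v j) = if i = j then (1 : ℝ) else 0

namespace IsBarycentric

variable {v : Fin 3 → ℝ × ℝ} {lam : Fin 3 → ℝ × ℝ → ℝ}

theorem apply_edgeParam (h : IsBarycentric v lam) (i j : Fin 3) (t : ℝ) :
    lam i (edgeParam v j t) =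
      (1 + t) / 2 * lam i (v (j + 1)) + (1 - t) / 2 * lam i (v (j + 2)) := by
  obtain ⟨A, hA⟩ := h.affine i
  have hsum : (1 + t) / 2 + (1 - t) / 2 = 1 := by ring
  simp only [hA, edgeParam, Convex.combo_affine_apply hsum, smul_eq_mul]

theorem apply_edgeParam_self (h : IsBarycentric v lam) (j : Fin 3) (t : ℝ) :
    lam j (edgeParam v j t) = 0 := by
  simp [h.apply_edgeParam, h.kronecker]

theorem apply_edgeParam_add_one (h : IsBarycentric v lam) (j : Fin 3) (t : ℝ) :
    lam (j + 1) (edgeParam v j t) = (1 + t) / 2 := by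
  simp [h.apply_edgeParam, h.kronecker]

theorem apply_edgeParam_add_two (h : IsBarycentric v lam) (j : Fin 3) (t : ℝ) :
    lam (j + 2) (edgeParam v j t) = (1 - t) / 2 := by
  simp [h.apply_edgeParam, h.kronecker]

theorem phiB_self (h : IsBarycentric v lam) (j : Fin 3) (t : ℝ) :
    phiB lam j (edgeParam v j t) = 1 := by
  simp [phiB, h.apply_edgeParam_self]

theorem psiB_self (h : IsBarycentric v lam) (σ μ : ℝ) (j : Fin 3) (t : ℝ) :
    psiB σ μ lam j (edgeParam v j t) = pPoly σ μ t / pNormSq σ μ := by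
  rw [psiB, h.phiB_self, h.apply_edgeParam_self, h.apply_edgeParam_add_one,
    h.apply_edgeParam_add_two, Acoef, pPoly]
  ring

theorem phiB_add_one (h : IsBarycentric v lam) (j : Fin 3) (t : ℝ) :
    phiB lam (j + 1) (edgeParam v j t) = -t := by
  rw [phiB, h.apply_edgeParam_add_one]
  ring

theorem phiB_add_two (h : IsBarycentric v lam) (j : Fin 3) (t : ℝ) :
    phiB lam (j + 2) (edgeParam v j t) = t := by
  rw [phiB, h.apply_edgeParam_add_two]
  ring

theorem psiB_of_ne (h : IsBarycentric v lam) (σ μ : ℝ) {i j : Fin 3} (hij : i ≠ j) (t : ℝ) :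
    psiB σ μ lam i (edgeParam v j t) =
      (2 / pNormSq σ μ - Acoef σ μ) * phiB lam i (edgeParam v j t) := by
  rcases eq_add_one_or_eq_add_two_of_ne hij with rfl | rfl
  · rw [psiB, h.phiB_add_one, show j + 1 + 1 = j + 2 by grind, show j + 1 + 2 = j by grind,
      h.apply_edgeParam_self, h.apply_edgeParam_add_one, h.apply_edgeParam_add_two]
    ring
  · rw [psiB, h.phiB_add_two, show j + 2 + 1 = j by grind, show j + 2 + 2 = j + 1 by grind,
      h.apply_edgeParam_self, h.apply_edgeParam_add_one, h.apply_edgeParam_add_two]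
    ring

theorem phiB_odd (h : IsBarycentric v lam) {i j : Fin 3} (hij : i ≠ j) :
    (fun t => phiB lam i (edgeParam v j t)).Odd := fun t => by
  rcases eq_add_one_or_eq_add_two_of_ne hij with rfl | rfl
  · simp only [h.phiB_add_one]
  · simp only [h.phiB_add_two]

theorem psiB_odd (h : IsBarycentric v lam) (σ μ : ℝ) {i j : Fin 3} (hij : i ≠ j) :
    (fun t => psiB σ μ lam i (edgeParam v j t)).Odd := by
  simp only [h.psiB_of_ne σ μ hij]
  exact (h.phiB_odd hij).const_smul (2 / pNormSq σ μ - Acoef σ μ)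

end IsBarycentric

theorem basis_first_family_general {v : Fin 3 → ℝ × ℝ} {lam : Fin 3 → ℝ × ℝ → ℝ}
    (h : IsBarycentric v lam) {σ μ : ℝ} (hσ : 0 < σ) (hμ : 3 / 4 < μ) (i j : Fin 3) :
    (∫ t in (-1 : ℝ)..1, phiB lam i (edgeParam v j t) * kTilde σ μ t
        = if i = j then (1 : ℝ) else 0) ∧
    (∫ t in (-1 : ℝ)..1, pPoly σ μ t * phiB lam i (edgeParam v j t) * kTilde σ μ t = 0) ∧
    (∫ t in (-1 : ℝ)..1, psiB σ μ lam i (edgeParam v j t) * kTilde σ μ t = 0) ∧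
    (∫ t in (-1 : ℝ)..1, pPoly σ μ t * psiB σ μ lam i (edgeParam v j t) * kTilde σ μ t
        = if i = j then (1 : ℝ) else 0) := by
  have hk := kTilde_even σ μ
  have hp := pPoly_even σ μ
  rcases eq_or_ne i j with rfl | hij
  · have hψ : ∫ t in (-1 : ℝ)..1, psiB σ μ lam i (edgeParam v i t) * kTilde σ μ t = 0 := by
      simp only [h.psiB_self, div_mul_eq_mul_div, intervalIntegral.integral_div,
        integral_pPoly_mul_kTilde hσ hμ, zero_div]
    have hpψ : ∫ t in (-1 : ℝ)..1,
        pPoly σ μ t * psiB σ μ lam i (edgeParam v i t) * kTilde σ μ t = 1 := by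
      simp only [h.psiB_self, mul_div_assoc', ← pow_two, div_mul_eq_mul_div,
        intervalIntegral.integral_div]
      exact div_self (pNormSq_pos hσ hμ).ne'
    simpa [h.phiB_self, hψ, hpψ, integral_kTilde hσ hμ] using integral_pPoly_mul_kTilde hσ hμ
  · have hφ := h.phiB_odd hij
    have hψ := h.psiB_odd σ μ hij
    simp only [if_neg hij]
    exact ⟨integral_eq_zero_of_odd (hφ.mul_even hk) 1,
      integral_eq_zero_of_odd ((hp.mul_odd hφ).mul_even hk) 1,
      integral_eq_zero_of_odd (hψ.mul_even hk) 1,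
      integral_eq_zero_of_odd ((hp.mul_odd hψ).mul_even hk) 1⟩

/-- The functions `φᵢ, ψᵢ` form the dual basis of the enriched edge functionals
`I_j, L_j` of the first family. -/
theorem basis_first_family (v : Fin 3 → ℝ × ℝ) (hv : AffineIndependent ℝ v)
    (lam : Fin 3 → ℝ × ℝ → ℝ)
    (hlam : ∀ i, ∃ A : (ℝ × ℝ) →ᵃ[ℝ] ℝ, ∀ x, lam i x = A x)
    (hkr : ∀ i j, lam i (v j) = if i = j then (1:ℝ) else 0)
    (σ μ : ℝ) (hσ : 0 < σ) (hμ : 1 ≤ μ)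
    (i j : Fin 3) :
    (∫ t in (-1:ℝ)..1, phiB lam i (edgeParam v j t) * kTilde σ μ t
        = if i = j then (1:ℝ) else 0) ∧
    (∫ t in (-1:ℝ)..1, pPoly σ μ t * phiB lam i (edgeParam v j t) * kTilde σ μ t = 0) ∧
    (∫ t in (-1:ℝ)..1, psiB σ μ lam i (edgeParam v j t) * kTilde σ μ t = 0) ∧
    (∫ t in (-1:ℝ)..1, pPoly σ μ t * psiB σ μ lam i (edgeParam v j t) * kTilde σ μ t
        = if i = j then (1:ℝ) else 0) :=
  basis_first_family_general ⟨hlam, hkr⟩ hσ (by linarith) i j
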